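/- arXiv:1807.10062 — 2 statements merged into one kernel-verified Lean document; each statement's English description precedes it below -/
import Mathlib

section
/- For every integer k ≥ 2, R_3(B(K_3), k) ≤ 3k/4 + 4; that is, for every n with n ≥ 3k/4 + 4, every k-coloring of the 3-element subsets of an n-element set contains three pairwise distinct 3-sets of the same color forming a Berge-K_3. -/
/-!
A Berge-triangle-free family `A` of triples on `n` points has at most `n² / 8` members. In such a
family no triple has two of its pairs covered by other members, so every `s ∈ A` has an *apex*
`v ∈ s` for which both pairs of `s` through `v` lie in no other member of `A` (`exists_apex`).
These pairs, two for each member of `A`, are the edges of a graph with `2|A|` edges. That graph is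
triangle-free: the sides of a triangle either come from three different members, which then form
a Berge-triangle, or two of them come from one member, which then owns all three sides although it
contributes only two. Mantel's theorem gives `2|A| ≤ n² / 4` (`eight_mul_card_le`).

If no colour class contains a Berge-triangle, then `n.choose 3 ≤ k * n² / 8`, which is impossible
as soon as `3k < 4(n - 3)`. The least such `n` is `⌊3k/4⌋ + 4`, which is what the bound on
`bergeRamsey` needs.
-/

open SimpleGraph

/-- A set family `A` of hyperedges contains a Berge-`G` hypergraph. -/
def BergeIn {V α : Type} (G : SimpleGraph V) (A : Set (Finset α)) : Prop :=
  ∃ φ : V → α, Function.Injective φ ∧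
    ∃ ψ : G.edgeSet → Finset α, Function.Injective ψ ∧
      (∀ e, ψ e ∈ A) ∧
      ∀ (e : G.edgeSet), ∀ x ∈ (e : Sym2 V), φ x ∈ ψ e

/-- Every `k`-coloring of the `r`-element subsets of an `n`-element set contains a
monochromatic Berge-`G`. -/
def BergeRamseyProp {V : Type} (G : SimpleGraph V) (r k n : ℕ) : Prop :=
  ∀ c : Finset (Fin n) → Fin k, ∃ i : Fin k,
    BergeIn G {s : Finset (Fin n) | s.card = r ∧ c s = i}

/-- `R_r(𝓑(G), k)`. -/
noncomputable def bergeRamsey {V : Type} (G : SimpleGraph V) (r k : ℕ) : ℕ :=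
  sInf {n | BergeRamseyProp G r k n}

/-- The triangle `K₃`. -/
def K3 : SimpleGraph (Fin 3) := ⊤

/-- `A` has no Berge-triangle, spelled out with three core vertices and three hyperedges. -/
def BergeTriangleFree {α : Type} (A : Finset (Finset α)) : Prop :=
  ∀ x y z : α, x ≠ y → y ≠ z → x ≠ z → ∀ a ∈ A, ∀ b ∈ A, ∀ c ∈ A, a ≠ b → b ≠ c → a ≠ c →
    x ∈ a → y ∈ a → y ∈ b → z ∈ b → x ∈ c → z ∈ c → False

lemma bergeIn_K3 {α : Type} {A : Set (Finset α)} {x y z : α} (hxy : x ≠ y) (hyz : y ≠ z)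
    (hxz : x ≠ z) {a b c : Finset α} (ha : a ∈ A) (hb : b ∈ A) (hc : c ∈ A)
    (hab : a ≠ b) (hbc : b ≠ c) (hac : a ≠ c)
    (hxa : x ∈ a) (hya : y ∈ a) (hyb : y ∈ b) (hzb : z ∈ b) (hxc : x ∈ c) (hzc : z ∈ c) :
    BergeIn K3 A := by
  -- An edge of `K₃` is determined by the vertex it misses.
  refine ⟨![x, y, z], ?_, fun e => if (0 : Fin 3) ∉ e.1 then b else
    if (1 : Fin 3) ∉ e.1 then c else a, ?_, ?_, ?_⟩
  · intro i j h
    fin_cases i <;> fin_cases j <;> simp_all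
  · rintro ⟨e, he⟩ ⟨f, hf⟩ h
    induction e using Sym2.ind with | _ i j
    induction f using Sym2.ind with | _ i' j'
    simp only [K3, SimpleGraph.mem_edgeSet, SimpleGraph.top_adj] at he hf
    fin_cases i <;> fin_cases j <;> fin_cases i' <;> fin_cases j' <;> simp_all
  · intro e
    dsimp only
    split_ifs <;> assumption
  · rintro ⟨e, he⟩ v hv
    induction e using Sym2.ind with | _ i j
    simp only [K3, SimpleGraph.mem_edgeSet, SimpleGraph.top_adj] at he
    fin_cases i <;> fin_cases j <;> fin_cases v <;> simp_all

lemma exists_apex {α : Type} [DecidableEq α] {A : Finset (Finset α)} (h3 : ∀ s ∈ A, s.card = 3)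
    (hA : BergeTriangleFree A) {s : Finset α} (hs : s ∈ A) :
    ∃ v ∈ s, ∀ w ∈ s, w ≠ v → ∀ t ∈ A, v ∈ t → w ∈ t → t = s := by
  -- Two different pairs of `s` cannot both lie in members of `A` other than `s`.
  have key : ∀ x ∈ s, ∀ y ∈ s, ∀ z ∈ s, x ≠ y → y ≠ z → x ≠ z → ∀ t ∈ A, ∀ u ∈ A,
      t ≠ s → u ≠ s → x ∈ t → y ∈ t → y ∈ u → z ∈ u → False := by
    intro x hx y hy z hz hxy hyz hxz t ht u hu hts hus hxt hyt hyu hzu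
    refine hA x y z hxy hyz hxz t ht u hu s hs ?_ hus hts hxt hyt hyu hzu hx hz
    rintro rfl
    have h1 : ({x, y, z} : Finset α).card = 3 := Finset.card_eq_three.2 ⟨x, y, z, hxy, hxz, hyz, rfl⟩
    have e1 := Finset.eq_of_subset_of_card_le (s := {x, y, z}) (t := s)
      (by simp [Finset.insert_subset_iff, hx, hy, hz]) (by rw [h1, h3 s hs])
    have e2 := Finset.eq_of_subset_of_card_le (s := {x, y, z}) (t := t)
      (by simp [Finset.insert_subset_iff, hxt, hyt, hzu]) (by rw [h1, h3 t ht])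
    exact hts (e2.symm.trans e1)
  obtain ⟨a, b, c, hab, hac, hbc, rfl⟩ := Finset.card_eq_three.1 (h3 s hs)
  by_contra! hcon
  obtain ⟨w₁, hw₁, hn₁, t₁, ht₁, hv₁, hm₁, hne₁⟩ := hcon a (by simp)
  obtain ⟨w₂, hw₂, hn₂, t₂, ht₂, hv₂, hm₂, hne₂⟩ := hcon b (by simp)
  obtain ⟨w₃, hw₃, hn₃, t₃, ht₃, hv₃, hm₃, hne₃⟩ := hcon c (by simp)
  have ma : a ∈ ({a, b, c} : Finset α) := by simp
  have mb : b ∈ ({a, b, c} : Finset α) := by simp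
  have mc : c ∈ ({a, b, c} : Finset α) := by simp
  have kb := key a ma b mb c mc hab hbc hac
  have ka := key b mb a ma c mc hab.symm hac hbc
  have kc := key a ma c mc b mb hac hbc.symm hab
  simp only [Finset.mem_insert, Finset.mem_singleton] at hw₁ hw₂ hw₃
  grind

/-- Mantel's theorem, as the case `r = 2` of Turán's theorem. -/
lemma mantel {α : Type} [Fintype α] [DecidableEq α] (G : SimpleGraph α) [DecidableRel G.Adj]
    (h : G.CliqueFree 3) : 4 * G.edgeFinset.card ≤ Fintype.card α ^ 2 := by
  have := SimpleGraph.CliqueFree.card_edgeFinset_le (r := 2) h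
  rcases Nat.mod_two_eq_zero_or_one (Fintype.card α) with h0 | h0 <;>
    simp [h0] at this <;> omega

lemma eight_mul_card_le {α : Type} [Fintype α] [DecidableEq α] {A : Finset (Finset α)}
    (h3 : ∀ s ∈ A, s.card = 3) (hA : BergeTriangleFree A) :
    8 * A.card ≤ Fintype.card α ^ 2 := by
  classical
  obtain rfl | ⟨s₀, hs₀⟩ := A.eq_empty_or_nonempty
  · simp
  have : Nonempty α := (Finset.card_pos.1 (by rw [h3 s₀ hs₀]; norm_num)).to_type
  choose! v hv hU using fun s (hs : s ∈ A) => exists_apex h3 hA hs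
  let G : SimpleGraph α :=
    { Adj := fun x y => x ≠ y ∧ ∃ s ∈ A, x ∈ s ∧ y ∈ s ∧ (v s = x ∨ v s = y)
      symm := ⟨fun x y ⟨h, s, hs, hx, hy, h'⟩ => ⟨h.symm, s, hs, hy, hx, h'.symm⟩⟩
      loopless := ⟨fun x h => h.1 rfl⟩ }
  have hGU : ∀ x y, x ≠ y → ∀ s ∈ A, x ∈ s → y ∈ s → (v s = x ∨ v s = y) →
      ∀ t ∈ A, x ∈ t → y ∈ t → t = s := by
    rintro x y hxy s hs hx hy (h | h) t ht hxt hyt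
    · exact hU s hs y hy (by rw [h]; exact hxy.symm) t ht (h ▸ hxt) hyt
    · exact hU s hs x hx (by rw [h]; exact hxy) t ht (h ▸ hyt) hxt
  have hfree : G.CliqueFree 3 := by
    intro T hT
    obtain ⟨x, y, z, ⟨hxy, a, ha, hxa, hya, hva⟩, ⟨hxz, c, hc, hxc, hzc, hvc⟩,
      ⟨hyz, b, hb, hyb, hzb, hvb⟩, -⟩ := SimpleGraph.is3Clique_iff.1 hT
    have ua := hGU x y hxy a ha hxa hya hva
    have ub := hGU y z hyz b hb hyb hzb hvb
    have uc := hGU x z hxz c hc hxc hzc hvc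
    by_cases hab : a = b
    · have := uc a ha hxa (hab ▸ hzb)
      grind
    by_cases hbc : b = c
    · have := ua b hb (hbc ▸ hxc) hyb
      grind
    by_cases hac : a = c
    · have := ub a ha hya (hac ▸ hzc)
      grind
    exact hA x y z hxy hyz hxz a ha b hb c hc hab hbc hac hxa hya hyb hzb hxc hzc
  have hcard : (A.sigma fun s => s.erase (v s)).card = 2 * A.card := by
    rw [Finset.card_sigma, Finset.sum_congr rfl (g := fun _ => 2), Finset.sum_const, smul_eq_mul,
      mul_comm]
    intro s hs
    rw [Finset.card_erase_of_mem (hv s hs), h3 s hs]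
  have hle : (A.sigma fun s => s.erase (v s)).card ≤ G.edgeFinset.card := by
    refine Finset.card_le_card_of_injOn (fun p => s(v p.1, p.2)) ?_ ?_
    · rintro ⟨s, w⟩ h
      simp only [Finset.coe_sigma, Set.mem_sigma_iff, Finset.mem_coe, Finset.mem_erase] at h
      obtain ⟨hs, hw, hws⟩ := h
      simp only [SimpleGraph.coe_edgeFinset, SimpleGraph.mem_edgeSet]
      exact ⟨hw.symm, s, hs, hv s hs, hws, Or.inl rfl⟩
    · rintro ⟨s, w⟩ h ⟨s', w'⟩ h' heq
      simp only [Finset.coe_sigma, Set.mem_sigma_iff, Finset.mem_coe, Finset.mem_erase] at h h'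
      obtain ⟨hs, hw, hws⟩ := h
      obtain ⟨hs', hw', hws'⟩ := h'
      have hvs' := hv s' hs'
      have hss : s' = s := by
        simp only [Sym2.eq_iff] at heq
        refine hU s hs w hws hw s' hs' ?_ ?_ <;> rcases heq with ⟨e1, e2⟩ | ⟨e1, e2⟩ <;> simp_all
      subst hss
      simp only [Sym2.eq_iff] at heq
      rcases heq with ⟨e1, e2⟩ | ⟨e1, e2⟩
      · rw [e2]
      · exact absurd e2 hw
  have := mantel G hfree
  omega

lemma bergeRamseyProp_of_lt {k n : ℕ} (h : 3 * k + 12 < 4 * n) : BergeRamseyProp K3 3 k n := by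
  intro c
  by_contra! hcon
  have hclass : ∀ i : Fin k,
      8 * ((Finset.powersetCard 3 (Finset.univ : Finset (Fin n))).filter (c · = i)).card
        ≤ n ^ 2 := by
    intro i
    have := eight_mul_card_le (A := (Finset.powersetCard 3 Finset.univ).filter (c · = i))
      (by intro s hs; simp at hs; exact hs.1) (by
        intro x y z hxy hyz hxz a ha b hb d hd hab hbd had h1 h2 h3 h4 h5 h6
        simp at ha hb hd
        exact hcon i (bergeIn_K3 hxy hyz hxz ha hb hd hab hbd had h1 h2 h3 h4 h5 h6))
    simpa using this
  have hsum := Finset.card_eq_sum_card_fiberwise (f := c) (t := Finset.univ)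
    (s := Finset.powersetCard 3 (Finset.univ : Finset (Fin n))) (by intro x _; simp)
  have hle : 8 * n.choose 3 ≤ k * n ^ 2 := by
    rw [Finset.card_powersetCard, Finset.card_univ, Fintype.card_fin] at hsum
    rw [hsum, Finset.mul_sum]
    refine (Finset.sum_le_sum fun i _ => hclass i).trans ?_
    simp
  obtain ⟨m, rfl⟩ : ∃ m, n = m + 3 := ⟨n - 3, by omega⟩
  have hch : (m + 3).choose 3 * 6 = (m + 3) * (m + 2) * (m + 1) := by
    have := Nat.descFactorial_eq_factorial_mul_choose (m + 3) 3
    simp [Nat.descFactorial, Nat.factorial] at this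
    linarith
  have hk : 3 * k + 1 ≤ 4 * m := by omega
  nlinarith [Nat.mul_le_mul_right ((m + 3) ^ 2) hk]

/-- For every `k ≥ 2`, `R₃(𝓑(K₃), k) ≤ 3k/4 + 4`; that is, for every `n ≥ 3k/4 + 4`, every
`k`-coloring of the 3-element subsets of an `n`-element set has a monochromatic Berge-`K₃`. -/
theorem bergeRamsey_K3_upper (k : ℕ) (hk : 2 ≤ k) :
    (bergeRamsey K3 3 k : ℝ) ≤ 3 * k / 4 + 4 ∧
    ∀ n : ℕ, 3 * (k : ℝ) / 4 + 4 ≤ n → BergeRamseyProp K3 3 k n := by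
  refine ⟨?_, fun n hn => bergeRamseyProp_of_lt ?_⟩
  · have h1 : bergeRamsey K3 3 k ≤ 3 * k / 4 + 4 :=
      Nat.sInf_le (bergeRamseyProp_of_lt (by omega))
    have h2 : 4 * bergeRamsey K3 3 k ≤ 3 * k + 16 := by omega
    have h3 : 4 * (bergeRamsey K3 3 k : ℝ) ≤ 3 * k + 16 := by exact_mod_cast h2
    linarith
  · have h1 : 3 * (k : ℝ) + 16 ≤ 4 * n := by linarith
    have h2 : 3 * k + 16 ≤ 4 * n := by exact_mod_cast h1
    omega
end

section
/- R(K_4^*, 2) = 7: every 2-coloring of the edges of K_7 contains a monochromatic subgraph isomorphic to some member of the family K_4^*, and there is a 2-coloring of the edges of K_6 containing no such monochromatic subgraph. -/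
/-!
A graph contains a member of `K₄*` if and only if it has a triangle whose three vertices all have
degree at least `3`: the third neighbours of the triangle vertices either all coincide (`K₄`),
coincide for exactly two of them (`K4ePendant`), or are distinct (`triPendants`).

**Upper bound.** Suppose a 2-coloring of `K₇` has no monochromatic such triangle. Write `dᵢ(v)` for
the degree of `v` in color `i`, so `d₀(v) + d₁(v) = 6`, and call `v` *low in color `i`* if
`dᵢ(v) ≤ 2`. Counting ordered triples, Goodman's identity (`goodman`) reads
`2 · 210 = 2 (S₀ + S₁) + 6 ∑ᵥ d₀(v) d₁(v)`, with `Sᵢ` the number of ordered triangles of color `i`.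
Every triangle of color `i` has a vertex low in color `i`, and `v` lies in at most
`dᵢ(v) (dᵢ(v) - 1)` ordered pairs completing a triangle at `v`, so
`210 ≤ 3 ∑ᵥ (d₀ d₁ + [v low in 0] d₀ (d₀ - 1) + [v low in 1] d₁ (d₁ - 1))`. Each summand is at most
`10`, and `3 · 7 · 10 = 210`, so equality holds throughout (`extremal`). Hence every vertex has
degree `2` in one color and `4` in the other, the two neighbours of a vertex low in color `i` are
joined in color `i`, and every triangle of color `i` has exactly one low vertex. Therefore two
vertices low in color `i` are never joined in color `i`, so three of them would form a triangle in
the other color with all degrees `4`. So at most `2 + 2` vertices are low in some color, while all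
`7` are.

**Lower bound.** Color the edges of two disjoint triangles with `0` and the `K₃,₃` between them
with `1`: in color `0` all degrees are `2`, and color `1` is triangle-free.
-/

open SimpleGraph

/-- The complete graph `K₄`. -/
def K4 : SimpleGraph (Fin 4) := ⊤

/-- `K₄` minus the edge `{2,3}` with a pendant edge `{2,4}` attached at the degree-2 vertex `2`. -/
def K4ePendant : SimpleGraph (Fin 5) :=
  SimpleGraph.fromEdgeSet {s(0, 1), s(0, 2), s(0, 3), s(1, 2), s(1, 3), s(2, 4)}

/-- A triangle `{0,1,2}` with pendant edges to new vertices `3`, `4`, `5`. -/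
def triPendants : SimpleGraph (Fin 6) :=
  SimpleGraph.fromEdgeSet {s(0, 1), s(1, 2), s(0, 2), s(0, 3), s(1, 4), s(2, 5)}

/-- The edge-coloring `c` of `K_n` contains a copy of the graph `F` all of whose edges have
color `i`. -/
def MonoCopy {W : Type} (F : SimpleGraph W) {n k : ℕ} (c : Sym2 (Fin n) → Fin k)
    (i : Fin k) : Prop :=
  ∃ f : W → Fin n, Function.Injective f ∧ ∀ x y : W, F.Adj x y → c s(f x, f y) = i

/-- Every `k`-coloring of the edges of `K_n` contains a monochromatic member of the family
`K₄* = {K₄, K4ePendant, triPendants}`. -/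
def K4starRamseyProp (k n : ℕ) : Prop :=
  ∀ c : Sym2 (Fin n) → Fin k, ∃ i : Fin k,
    MonoCopy K4 c i ∨ MonoCopy K4ePendant c i ∨ MonoCopy triPendants c i

/-- `R(K₄*, k)`. -/
noncomputable def K4starRamsey (k : ℕ) : ℕ := sInf {n | K4starRamseyProp k n}

/-! ### Monochromatic triangles and their degrees -/

/-- The neighbours of `v` in color `i`. -/
def nbr {n : ℕ} (c : Sym2 (Fin n) → Fin 2) (i : Fin 2) (v : Fin n) : Finset (Fin n) :=
  Finset.univ.filter fun x => v ≠ x ∧ c s(v, x) = i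

/-- The `0`-`1` indicator that `x` and `y` are joined by an edge of color `i`. It is `0` on the
diagonal, where `c` takes a meaningless value. -/
def ind {n : ℕ} (c : Sym2 (Fin n) → Fin 2) (i : Fin 2) (x y : Fin n) : ℕ :=
  if x ≠ y ∧ c s(x, y) = i then 1 else 0

/-- The degree of `v` in color `i`. -/
def deg {n : ℕ} (c : Sym2 (Fin n) → Fin 2) (i : Fin 2) (v : Fin n) : ℕ :=
  ∑ x, ind c i v x

/-- The indicator that `v` has degree at most `2` in color `i`. -/
def low {n : ℕ} (c : Sym2 (Fin n) → Fin 2) (i : Fin 2) (v : Fin n) : ℕ :=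
  if deg c i v ≤ 2 then 1 else 0

/-- The indicator of the ordered triangle `(x, y, z)` in color `i`. -/
def tri {n : ℕ} (c : Sym2 (Fin n) → Fin 2) (i : Fin 2) (x y z : Fin n) : ℕ :=
  ind c i x y * ind c i x z * ind c i y z

/-- The existence of a member of `K₄*` in color `i`. -/
def HasCopy {n : ℕ} (c : Sym2 (Fin n) → Fin 2) (i : Fin 2) : Prop :=
  MonoCopy K4 c i ∨ MonoCopy K4ePendant c i ∨ MonoCopy triPendants c i

section General

variable {n : ℕ} {c : Sym2 (Fin n) → Fin 2} {i : Fin 2}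

lemma ind_comm (x y : Fin n) : ind c i x y = ind c i y x := by
  simp only [ind, Sym2.eq_swap (a := x), ne_comm (a := x)]

lemma deg_eq_card (v : Fin n) : deg c i v = (nbr c i v).card := by
  simp [deg, nbr, ind]

lemma ind_eq_one {x y : Fin n} : ind c i x y = 1 ↔ x ≠ y ∧ c s(x, y) = i := by
  simp [ind]

/-- A vertex of degree at least `3` has a neighbour avoiding two given vertices. -/
lemma exists_nbr_avoiding {v : Fin n} (h : 3 ≤ deg c i v) (a b : Fin n) :
    ∃ x, v ≠ x ∧ a ≠ x ∧ b ≠ x ∧ c s(v, x) = i := by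
  have hc : ({a, b} : Finset (Fin n)).card < (nbr c i v).card := by
    rw [← deg_eq_card]
    exact lt_of_le_of_lt Finset.card_le_two h
  obtain ⟨x, hx, hx'⟩ := Finset.exists_mem_notMem_of_card_lt_card hc
  simp only [nbr, Finset.mem_filter, Finset.mem_univ, true_and] at hx
  simp only [Finset.mem_insert, Finset.mem_singleton, not_or] at hx'
  exact ⟨x, hx.1, Ne.symm hx'.1, Ne.symm hx'.2, hx.2⟩

lemma monoCopy_K4ePendant {a b d p r : Fin n} (hab : a ≠ b) (had : a ≠ d) (hbd : b ≠ d)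
    (cab : c s(a, b) = i) (cad : c s(a, d) = i) (cbd : c s(b, d) = i)
    (hap : a ≠ p) (hbp : b ≠ p) (hdp : d ≠ p) (cap : c s(a, p) = i) (cbp : c s(b, p) = i)
    (har : a ≠ r) (hbr : b ≠ r) (hdr : d ≠ r) (cdr : c s(d, r) = i) (hpr : p ≠ r) :
    MonoCopy K4ePendant c i := by
  refine ⟨![a, b, d, p, r], ?_, ?_⟩
  · intro x y
    fin_cases x <;> fin_cases y <;> simp_all [eq_comm]
  · intro x y h
    have h' : s(x, y) ∈ ({s(0, 1), s(0, 2), s(0, 3), s(1, 2), s(1, 3), s(2, 4)} :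
        Set (Sym2 (Fin 5))) := ((SimpleGraph.fromEdgeSet_adj _).1 h).1
    simp only [Set.mem_insert_iff, Set.mem_singleton_iff, Sym2.eq_iff] at h'
    rcases h' with h' | h' | h' | h' | h' | h' <;> obtain ⟨rfl, rfl⟩ | ⟨rfl, rfl⟩ := h' <;>
      first | assumption | (rw [Sym2.eq_swap]; assumption)

/-- A monochromatic triangle all of whose vertices have degree at least `3` in its color yields a
member of `K₄*`, decided by the coincidences among the third neighbours `p`, `q`, `r`. -/
lemma hasCopy_of_triangle {a b d : Fin n} (hab : a ≠ b) (had : a ≠ d) (hbd : b ≠ d)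
    (cab : c s(a, b) = i) (cad : c s(a, d) = i) (cbd : c s(b, d) = i)
    (da : 3 ≤ deg c i a) (db : 3 ≤ deg c i b) (dd : 3 ≤ deg c i d) : HasCopy c i := by
  obtain ⟨p, hap, hbp, hdp, cap⟩ := exists_nbr_avoiding da b d
  obtain ⟨q, hbq, haq, hdq, cbq⟩ := exists_nbr_avoiding db a d
  obtain ⟨r, hdr, har, hbr, cdr⟩ := exists_nbr_avoiding dd a b
  have cba : c s(b, a) = i := by rwa [Sym2.eq_swap]
  have cda : c s(d, a) = i := by rwa [Sym2.eq_swap]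
  have cdb : c s(d, b) = i := by rwa [Sym2.eq_swap]
  by_cases hpq : p = q
  · subst hpq
    by_cases hpr : p = r
    · subst hpr
      left
      refine ⟨![a, b, d, p], ?_, ?_⟩
      · intro x y
        fin_cases x <;> fin_cases y <;> simp_all [eq_comm]
      · intro x y h
        have h' : x ≠ y := h
        fin_cases x <;> fin_cases y <;>
          first
          | exact absurd rfl h'
          | assumption
          | (rw [Sym2.eq_swap]; assumption)
    · exact .inr <| .inl <| monoCopy_K4ePendant hab had hbd cab cad cbd hap hbp hdp cap cbq
        har hbr hdr cdr hpr
  · by_cases hpr : p = r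
    · subst hpr
      exact .inr <| .inl <| monoCopy_K4ePendant had hab hbd.symm cad cab cdb hap hdp hbp cap cdr
        haq hdq hbq cbq hpq
    · by_cases hqr : q = r
      · subst hqr
        exact .inr <| .inl <| monoCopy_K4ePendant hbd hab.symm had.symm cbd cba cda hbq hdq haq
          cbq cdr hbp hdp hap cap (Ne.symm hpq)
      · right; right
        refine ⟨![a, b, d, p, q, r], ?_, ?_⟩
        · intro x y
          fin_cases x <;> fin_cases y <;> simp_all [eq_comm]
        · intro x y h
          have h' : s(x, y) ∈ ({s(0, 1), s(1, 2), s(0, 2), s(0, 3), s(1, 4), s(2, 5)} :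
              Set (Sym2 (Fin 6))) := ((SimpleGraph.fromEdgeSet_adj _).1 h).1
          simp only [Set.mem_insert_iff, Set.mem_singleton_iff, Sym2.eq_iff] at h'
          rcases h' with h' | h' | h' | h' | h' | h' <;>
            obtain ⟨rfl, rfl⟩ | ⟨rfl, rfl⟩ := h' <;>
            first | assumption | (rw [Sym2.eq_swap]; assumption)

lemma tri_eq_one_or_zero (x y z : Fin n) :
    tri c i x y z = 0 ∨ (tri c i x y z = 1 ∧ ind c i x y = 1 ∧ ind c i x z = 1 ∧
      ind c i y z = 1) := by
  unfold tri ind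
  split_ifs <;> simp

/-- Without a member of `K₄*` in color `i`, every triangle of color `i` has a low vertex. -/
lemma tri_le (h : ¬ HasCopy c i) (x y z : Fin n) :
    tri c i x y z ≤ tri c i x y z * (low c i x + low c i y + low c i z) := by
  rcases tri_eq_one_or_zero (c := c) (i := i) x y z with h0 | ⟨h1, hxy, hxz, hyz⟩
  · simp [h0]
  · rw [ind_eq_one] at hxy hxz hyz
    by_contra hlt
    apply h
    have hx : low c i x = 0 := by rw [h1] at hlt; omega
    have hy : low c i y = 0 := by rw [h1] at hlt; omega
    have hz : low c i z = 0 := by rw [h1] at hlt; omega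
    simp only [low, ite_eq_right_iff, one_ne_zero, imp_false, not_le] at hx hy hz
    exact hasCopy_of_triangle hxy.1 hxz.1 hyz.1 hxy.2 hxz.2 hyz.2 hx hy hz

/-- The three vertices of an ordered triangle play symmetric roles. -/
lemma sum_tri_low :
    ∑ x, ∑ y, ∑ z, tri c i x y z * (low c i x + low c i y + low c i z) =
      3 * ∑ x, low c i x * ∑ y, ∑ z, tri c i x y z := by
  have e1 : ∑ x, ∑ y, ∑ z, tri c i x y z * low c i x =
      ∑ x, low c i x * ∑ y, ∑ z, tri c i x y z := by
    simp only [Finset.mul_sum, mul_comm]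
  have e2 : ∑ x, ∑ y, ∑ z, tri c i x y z * low c i y =
      ∑ x, low c i x * ∑ y, ∑ z, tri c i x y z := by
    rw [← e1, Finset.sum_comm]
    refine Finset.sum_congr rfl fun x _ => Finset.sum_congr rfl fun y _ =>
      Finset.sum_congr rfl fun z _ => ?_
    simp only [tri, ind_comm y x]
    ring
  have e3 : ∑ x, ∑ y, ∑ z, tri c i x y z * low c i z =
      ∑ x, low c i x * ∑ y, ∑ z, tri c i x y z := by
    rw [← e2]
    refine Finset.sum_congr rfl fun x _ => ?_
    rw [Finset.sum_comm]
    refine Finset.sum_congr rfl fun y _ => Finset.sum_congr rfl fun z _ => ?_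
    simp only [tri, ind_comm z y]
    ring
  simp only [mul_add, Finset.sum_add_distrib, e1, e2, e3]
  ring

/-- A vertex of degree `d` lies in at most `d (d - 1)` ordered triangles with itself first; stated
without subtraction. -/
lemma sum_tri_add_deg_le (v : Fin n) :
    ∑ y, ∑ z, tri c i v y z + deg c i v ≤ deg c i v * deg c i v := by
  have h : ∀ y z, tri c i v y z + (if y = z then ind c i v y else 0) ≤
      ind c i v y * ind c i v z := by
    intro y z
    by_cases hyz : y = z
    · subst hyz
      unfold tri ind
      split_ifs <;> simp_all
    · simp only [hyz, if_false, add_zero]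
      unfold tri ind
      split_ifs <;> simp
  calc ∑ y, ∑ z, tri c i v y z + deg c i v
      = ∑ y, ∑ z, (tri c i v y z + (if y = z then ind c i v y else 0)) := by
        simp [Finset.sum_add_distrib, deg]
    _ ≤ ∑ y, ∑ z, ind c i v y * ind c i v z :=
        Finset.sum_le_sum fun y _ => Finset.sum_le_sum fun z _ => h y z
    _ = deg c i v * deg c i v := by rw [deg, Finset.sum_mul_sum]

/-- The pointwise form of Goodman's identity: three distinct vertices span either a monochromatic
triangle or one having exactly two bichromatic corners. -/
lemma goodman_pointwise (x y z : Fin n) :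
    2 * (if x ≠ y ∧ x ≠ z ∧ y ≠ z then 1 else 0) = 2 * (tri c 0 x y z + tri c 1 x y z) +
      ((ind c 0 x y * ind c 1 x z + ind c 1 x y * ind c 0 x z) +
       (ind c 0 y x * ind c 1 y z + ind c 1 y x * ind c 0 y z) +
       (ind c 0 z x * ind c 1 z y + ind c 1 z x * ind c 0 z y)) := by
  simp only [ind_comm y x, ind_comm z x, ind_comm z y]
  have h2 : ∀ k : Fin 2, k = 0 ∨ k = 1 := by decide
  unfold tri ind
  by_cases hxy : x = y <;> by_cases hxz : x = z <;> by_cases hyz : y = z <;>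
    rcases h2 (c s(x, y)) with a | a <;> rcases h2 (c s(x, z)) with b | b <;>
    rcases h2 (c s(y, z)) with d | d <;> simp_all [Sym2.eq_swap (a := y) (b := z)]

end General

/-! ### The extremal analysis on seven vertices -/

section Seven

variable {c : Sym2 (Fin 7) → Fin 2}

lemma deg_add_deg (v : Fin 7) : deg c 0 v + deg c 1 v = 6 := by
  have h2 : ∀ k : Fin 2, k = 0 ∨ k = 1 := by decide
  have h : ∀ x, ind c 0 v x + ind c 1 v x = if v ≠ x then 1 else 0 := by
    intro x
    unfold ind
    by_cases hx : v = x <;> rcases h2 (c s(v, x)) with a | a <;> simp_all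
  rw [deg, deg, ← Finset.sum_add_distrib, Finset.sum_congr rfl fun x _ => h x]
  clear h
  revert v
  decide

/-- Goodman's identity for a 2-coloring of `K₇`, counted over ordered triples. -/
lemma goodman :
    420 = 2 * (∑ x, ∑ y, ∑ z, tri c 0 x y z + ∑ x, ∑ y, ∑ z, tri c 1 x y z) +
      6 * ∑ v, deg c 0 v * deg c 1 v := by
  have hN : ∑ x : Fin 7, ∑ y : Fin 7, ∑ z : Fin 7,
      2 * (if x ≠ y ∧ x ≠ z ∧ y ≠ z then 1 else 0) = 420 := by decide +kernel
  have hx : ∑ x, ∑ y, ∑ z, (ind c 0 x y * ind c 1 x z + ind c 1 x y * ind c 0 x z) =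
      2 * ∑ v, deg c 0 v * deg c 1 v := by
    rw [Finset.mul_sum]
    refine Finset.sum_congr rfl fun x _ => ?_
    simp only [Finset.sum_add_distrib, deg]
    rw [← Finset.sum_mul_sum, ← Finset.sum_mul_sum]
    ring
  have hy : ∑ x, ∑ y, ∑ z, (ind c 0 y x * ind c 1 y z + ind c 1 y x * ind c 0 y z) =
      2 * ∑ v, deg c 0 v * deg c 1 v := by
    rw [← hx, Finset.sum_comm]
  have hz : ∑ x, ∑ y, ∑ z, (ind c 0 z x * ind c 1 z y + ind c 1 z x * ind c 0 z y) =
      2 * ∑ v, deg c 0 v * deg c 1 v := by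
    rw [← hy]
    refine Finset.sum_congr rfl fun x _ => ?_
    rw [Finset.sum_comm]
  rw [← hN]
  simp only [goodman_pointwise (c := c)]
  simp only [Finset.sum_add_distrib, ← Finset.mul_sum] at hx hy hz ⊢
  omega

/-- The vertex `v` contributes at most `10` to the upper bound for `210 / 3 = 70`, and equality
forces its degrees to be `2` and `4`. -/
lemma contribution_le (v : Fin 7) :
    deg c 0 v * deg c 1 v + low c 0 v * (deg c 0 v * deg c 0 v - deg c 0 v) +
      low c 1 v * (deg c 1 v * deg c 1 v - deg c 1 v) ≤ 10 ∧
    (deg c 0 v * deg c 1 v + low c 0 v * (deg c 0 v * deg c 0 v - deg c 0 v) +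
      low c 1 v * (deg c 1 v * deg c 1 v - deg c 1 v) = 10 →
      (deg c 0 v = 2 ∧ deg c 1 v = 4) ∨ (deg c 0 v = 4 ∧ deg c 1 v = 2)) := by
  have h := deg_add_deg (c := c) v
  unfold low
  generalize deg c 0 v = d at *
  generalize deg c 1 v = e at *
  obtain rfl : e = 6 - d := by omega
  have hd : d ≤ 6 := by omega
  interval_cases d <;> simp

/-- In a coloring of `K₇` without a monochromatic member of `K₄*`, every estimate entering the
triangle count is an equality. -/
lemma extremal (h : ∀ i, ¬ HasCopy c i) :
    (∀ v, (deg c 0 v = 2 ∧ deg c 1 v = 4) ∨ (deg c 0 v = 4 ∧ deg c 1 v = 2)) ∧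
    (∀ i v, deg c i v = 2 → ∑ y, ∑ z, tri c i v y z = 2) ∧
    (∀ i x y z, tri c i x y z = tri c i x y z * (low c i x + low c i y + low c i z)) := by
  have hG := goodman (c := c)
  have hS : ∀ i, ∑ x, ∑ y, ∑ z, tri c i x y z ≤
      ∑ x, ∑ y, ∑ z, tri c i x y z * (low c i x + low c i y + low c i z) := fun i =>
    Finset.sum_le_sum fun x _ => Finset.sum_le_sum fun y _ => Finset.sum_le_sum fun z _ =>
      tri_le (h i) x y z
  have hTv : ∀ i v, low c i v * ∑ y, ∑ z, tri c i v y z ≤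
      low c i v * (deg c i v * deg c i v - deg c i v) := fun i v =>
    Nat.mul_le_mul_left _ (Nat.le_sub_of_add_le (sum_tri_add_deg_le v))
  have hT : ∀ i, ∑ v, low c i v * ∑ y, ∑ z, tri c i v y z ≤
      ∑ v, low c i v * (deg c i v * deg c i v - deg c i v) := fun i =>
    Finset.sum_le_sum fun v _ => hTv i v
  have hC := Finset.sum_le_sum fun v (_ : v ∈ Finset.univ) => (contribution_le (c := c) v).1
  simp only [Finset.sum_add_distrib, Finset.sum_const, Finset.card_univ, Fintype.card_fin,
    smul_eq_mul] at hC
  have hS0 := hS 0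
  have hS1 := hS 1
  have hT0 := hT 0
  have hT1 := hT 1
  have hL0 := sum_tri_low (c := c) (i := 0)
  have hL1 := sum_tri_low (c := c) (i := 1)
  have hdeg : ∀ v, (deg c 0 v = 2 ∧ deg c 1 v = 4) ∨ (deg c 0 v = 4 ∧ deg c 1 v = 2) := by
    intro v
    refine (contribution_le v).2 ?_
    refine (Finset.sum_eq_sum_iff_of_le fun v _ => (contribution_le (c := c) v).1).1 ?_ v
      (Finset.mem_univ v)
    simp only [Finset.sum_add_distrib, Finset.sum_const, Finset.card_univ, Fintype.card_fin,
      smul_eq_mul]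
    omega
  have hTeq : ∀ i, ∑ v, low c i v * ∑ y, ∑ z, tri c i v y z =
      ∑ v, low c i v * (deg c i v * deg c i v - deg c i v) := by
    rw [Fin.forall_fin_two]
    constructor <;> omega
  have hSeq : ∀ i, ∑ x, ∑ y, ∑ z, tri c i x y z =
      ∑ x, ∑ y, ∑ z, tri c i x y z * (low c i x + low c i y + low c i z) := by
    rw [Fin.forall_fin_two]
    constructor <;> omega
  refine ⟨hdeg, fun i v hv => ?_, fun i x y z => ?_⟩
  · have := (Finset.sum_eq_sum_iff_of_le fun v _ => hTv i v).1 (hTeq i) v (Finset.mem_univ v)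
    simpa [low, hv] using this
  · have h1 := (Finset.sum_eq_sum_iff_of_le fun x _ => Finset.sum_le_sum fun y _ =>
      Finset.sum_le_sum fun z _ => tri_le (h i) x y z).1 (hSeq i) x (Finset.mem_univ x)
    have h2 := (Finset.sum_eq_sum_iff_of_le fun y _ =>
      Finset.sum_le_sum fun z _ => tri_le (h i) x y z).1 h1 y (Finset.mem_univ y)
    exact (Finset.sum_eq_sum_iff_of_le fun z _ => tri_le (h i) x y z).1 h2 z (Finset.mem_univ z)

/-- Two vertices low in color `i` are not joined in color `i`: the edge between them would lie in a
triangle of color `i`, which has only one low vertex. -/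
lemma color_ne_of_low (h : ∀ i, ¬ HasCopy c i) {i : Fin 2} {v x : Fin 7}
    (hv : deg c i v = 2) (hx : deg c i x = 2) (hvx : v ≠ x) : c s(v, x) ≠ i := by
  intro hc
  obtain ⟨-, hT, hS⟩ := extremal h
  have hpos : ∑ y, ∑ z, tri c i v y z ≠ 0 := by rw [hT i v hv]; norm_num
  obtain ⟨p, -, hp⟩ := Finset.exists_ne_zero_of_sum_ne_zero hpos
  obtain ⟨q, -, hq⟩ := Finset.exists_ne_zero_of_sum_ne_zero hp
  obtain ⟨h1, hvp, hvq, hpq⟩ := (tri_eq_one_or_zero (c := c) (i := i) v p q).resolve_left hq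
  have hE := hS i v p q
  rw [ind_eq_one] at hvp hvq hpq
  have hN : ({p, q} : Finset (Fin 7)) = nbr c i v := by
    apply Finset.eq_of_subset_of_card_le
    · intro w hw
      simp only [Finset.mem_insert, Finset.mem_singleton] at hw
      rcases hw with rfl | rfl
      · simpa [nbr] using hvp
      · simpa [nbr] using hvq
    · rw [← deg_eq_card, hv, Finset.card_pair hpq.1]
  have hxN : x ∈ ({p, q} : Finset (Fin 7)) := by
    rw [hN]
    simpa [nbr] using ⟨hvx, hc⟩
  have lv : low c i v = 1 := by simp [low, hv]
  have lx : low c i x = 1 := by simp [low, hx]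
  simp only [Finset.mem_insert, Finset.mem_singleton] at hxN
  rw [h1] at hE
  rcases hxN with rfl | rfl <;> omega

/-- Three vertices low in color `i` would span a triangle in the other color `j`, in which they
have degree `4`. -/
lemma card_low_le (h : ∀ i, ¬ HasCopy c i) {i j : Fin 2} (hij : ∀ k, k ≠ i → k = j)
    (hd : ∀ v, deg c i v = 2 → deg c j v = 4) :
    (Finset.univ.filter fun v => deg c i v = 2).card ≤ 2 := by
  by_contra hlt
  obtain ⟨x, y, z, hx, hy, hz, hxy, hxz, hyz⟩ := Finset.two_lt_card_iff.1 (not_le.1 hlt)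
  simp only [Finset.mem_filter, Finset.mem_univ, true_and] at hx hy hz
  refine h j (hasCopy_of_triangle hxy hxz hyz (hij _ (color_ne_of_low h hx hy hxy))
    (hij _ (color_ne_of_low h hx hz hxz)) (hij _ (color_ne_of_low h hy hz hyz)) ?_ ?_ ?_)
  · rw [hd x hx]; norm_num
  · rw [hd y hy]; norm_num
  · rw [hd z hz]; norm_num

end Seven

lemma ramseyProp_two_seven : K4starRamseyProp 2 7 := by
  intro c
  by_contra hne
  have h : ∀ i, ¬ HasCopy c i := not_exists.1 hne
  obtain ⟨hdeg, -, -⟩ := extremal h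
  have h0 := card_low_le h (i := 0) (j := 1) (by decide) fun v hv => by
    have := hdeg v
    omega
  have h1 := card_low_le h (i := 1) (j := 0) (by decide) fun v hv => by
    have := hdeg v
    omega
  have hU : (Finset.univ : Finset (Fin 7)) ⊆ (Finset.univ.filter fun v => deg c 0 v = 2) ∪
      (Finset.univ.filter fun v => deg c 1 v = 2) := by
    intro v _
    have := hdeg v
    simp only [Finset.mem_union, Finset.mem_filter, Finset.mem_univ, true_and]
    omega
  have hcard := (Finset.card_le_card hU).trans (Finset.card_union_le _ _)
  rw [Finset.card_univ, Fintype.card_fin] at hcard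
  omega

/-! ### The coloring of `K₆` -/

/-- Color `0` on the edges inside `{0, 1, 2}` and inside `{3, 4, 5}`, color `1` between them. -/
def twoTriangles (e : Sym2 (Fin 6)) : Fin 2 :=
  if (∀ x, x ∈ e → x < 3) ∨ (∀ x, x ∈ e → 3 ≤ x) then 0 else 1

/-- No triangle of `twoTriangles` has a further edge of its color at the vertex `a`. -/
lemma twoTriangles_no_paw : ∀ a b d p : Fin 6, a ≠ b → a ≠ d → a ≠ p → b ≠ d → b ≠ p → d ≠ p →
    twoTriangles s(a, b) = twoTriangles s(a, d) → twoTriangles s(a, b) = twoTriangles s(b, d) →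
    twoTriangles s(a, b) = twoTriangles s(a, p) → False := by
  decide +kernel

/-- A graph containing a triangle with a pendant edge has no monochromatic copy in
`twoTriangles`. -/
lemma not_monoCopy_of_paw {W : Type} {F : SimpleGraph W} {a b d p : W} (i : Fin 2)
    (hab : F.Adj a b) (had : F.Adj a d) (hbd : F.Adj b d) (hap : F.Adj a p)
    (hbp : b ≠ p) (hdp : d ≠ p) : ¬ MonoCopy F twoTriangles i := by
  rintro ⟨f, hf, hc⟩
  exact twoTriangles_no_paw (f a) (f b) (f d) (f p) (hf.ne hab.ne) (hf.ne had.ne) (hf.ne hap.ne)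
    (hf.ne hbd.ne) (hf.ne hbp) (hf.ne hdp) ((hc _ _ hab).trans (hc _ _ had).symm)
    ((hc _ _ hab).trans (hc _ _ hbd).symm) ((hc _ _ hab).trans (hc _ _ hap).symm)

/-- `R(K₄*, 2) = 7`: every 2-coloring of the edges of `K₇` has a monochromatic member of
`K₄*`, while some 2-coloring of the edges of `K₆` has none. -/
theorem K4starRamsey_two :
    K4starRamseyProp 2 7 ∧
    ∃ c : Sym2 (Fin 6) → Fin 2, ∀ i : Fin 2,
      ¬ (MonoCopy K4 c i ∨ MonoCopy K4ePendant c i ∨ MonoCopy triPendants c i) := by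
  refine ⟨ramseyProp_two_seven, twoTriangles, fun i => ?_⟩
  -- In all three graphs `0, 1, 2` is a triangle and `3` is a further neighbour of `0`.
  rintro (h | h | h) <;> revert h <;>
    apply not_monoCopy_of_paw (a := 0) (b := 1) (d := 2) (p := 3) <;>
    simp [K4, K4ePendant, triPendants, SimpleGraph.fromEdgeSet_adj]
end
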